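/- Let 𝒜 ∈ U(p,q) have block decomposition 𝒜 = (A B; C D). Then (𝒜*𝒜 − I)(𝒜*𝒜 + I)⁻¹ equals the block matrix (0, A⁻¹B; B*(A*)⁻¹, 0) with zero diagonal blocks and off-diagonal blocks A⁻¹B and B*(A*)⁻¹. -/

import Mathlib

open Matrix

/-- The matrix I_{p,q} = diag(I_p, −I_q) defining the indefinite Hermitian form of
signature (p,q). -/
def Ipq (p q : ℕ) : Matrix (Fin p ⊕ Fin q) (Fin p ⊕ Fin q) ℂ :=
  Matrix.fromBlocks 1 0 0 (-1)

theorem Ipq_mul_self (p q : ℕ) : Ipq p q * Ipq p q = 1 := by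
  simp [Ipq, fromBlocks_multiply]

/-- The defining relation of U(p,q) is stable under conjugate transposition. -/
theorem mul_Ipq_mul_conjTranspose {p q : ℕ} {M : Matrix (Fin p ⊕ Fin q) (Fin p ⊕ Fin q) ℂ}
    (hM : Mᴴ * Ipq p q * M = Ipq p q) : M * Ipq p q * Mᴴ = Ipq p q := by
  have hleft : (Ipq p q * Mᴴ * Ipq p q) * M = 1 := by
    rw [mul_assoc, mul_assoc, ← mul_assoc Mᴴ, hM, Ipq_mul_self]
  have hright := mul_eq_one_comm.mp hleft
  calc M * Ipq p q * Mᴴ = M * (Ipq p q * Mᴴ * Ipq p q) * Ipq p q := by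
        simp only [mul_assoc, Ipq_mul_self, mul_one]
    _ = Ipq p q := by rw [hright, one_mul]

open scoped ComplexOrder in
theorem isUnit_det_conjTranspose_mul_self_add_one {m n : Type*} [Fintype m] [Fintype n]
    [DecidableEq n] (M : Matrix m n ℂ) : IsUnit (Mᴴ * M + 1).det :=
  (isUnit_iff_isUnit_det _).mp
    (PosDef.posSemidef_add (posSemidef_conjTranspose_mul_self M) PosDef.one).isUnit

/-- If 𝒜 ∈ U(p,q) has block decomposition 𝒜 = (A B; C D), then
(𝒜*𝒜 − I)(𝒜*𝒜 + I)⁻¹ = (0, A⁻¹B; B*(A*)⁻¹, 0). -/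
theorem cayley_like_formula_for_indefinite_unitary {p q : ℕ} (hp : 1 ≤ p) (hq : 1 ≤ q)
    (𝒜 : Matrix (Fin p ⊕ Fin q) (Fin p ⊕ Fin q) ℂ)
    (h𝒜 : 𝒜ᴴ * Ipq p q * 𝒜 = Ipq p q) :
    (𝒜ᴴ * 𝒜 - 1) * (𝒜ᴴ * 𝒜 + 1)⁻¹ =
      Matrix.fromBlocks 0 ((𝒜.toBlocks₁₁)⁻¹ * 𝒜.toBlocks₁₂)
        ((𝒜.toBlocks₁₂)ᴴ * ((𝒜.toBlocks₁₁)ᴴ)⁻¹) 0 := by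
  have hunit := isUnit_det_conjTranspose_mul_self_add_one 𝒜
  have hdual := mul_Ipq_mul_conjTranspose h𝒜
  suffices h : 𝒜ᴴ * 𝒜 - 1 =
      fromBlocks 0 ((𝒜.toBlocks₁₁)⁻¹ * 𝒜.toBlocks₁₂)
        ((𝒜.toBlocks₁₂)ᴴ * ((𝒜.toBlocks₁₁)ᴴ)⁻¹) 0 * (𝒜ᴴ * 𝒜 + 1) by
    rw [h, mul_nonsing_inv_cancel_right _ _ hunit]
  obtain ⟨A, B, C, D, rfl⟩ : ∃ A B C D, 𝒜 = fromBlocks A B C D :=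
    ⟨_, _, _, _, (fromBlocks_toBlocks 𝒜).symm⟩
  simp only [Ipq, fromBlocks_conjTranspose, fromBlocks_multiply, fromBlocks_inj,
    Matrix.mul_one, Matrix.mul_zero, add_zero, zero_sub, Matrix.mul_neg, Matrix.neg_mul,
    ← sub_eq_add_neg] at h𝒜 hdual
  obtain ⟨hAC, hAB, hBA, hBD⟩ := h𝒜
  obtain ⟨hAA, -⟩ := hdual
  have hC : Cᴴ * C = Aᴴ * A - 1 := by rw [← hAC]; abel
  have hCD : Cᴴ * D = Aᴴ * B := (sub_eq_zero.mp hAB).symm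
  have hDC : Dᴴ * C = Bᴴ * A := (sub_eq_zero.mp hBA).symm
  have hD : Dᴴ * D = Bᴴ * B + 1 := by rw [← sub_neg_eq_add, ← hBD]; abel
  have hBB : B * Bᴴ = A * Aᴴ - 1 := by rw [← hAA]; abel
  have hA : IsUnit A.det := by
    refine isUnit_of_mul_isUnit_right (x := Aᴴ.det) ?_
    rw [← det_mul, sub_eq_iff_eq_add'.mp hAC]
    exact isUnit_det_conjTranspose_mul_self_add_one C
  have hAH : IsUnit Aᴴ.det := by rw [det_conjTranspose]; exact hA.star
  have hABB : A⁻¹ * B * Bᴴ = Aᴴ - A⁻¹ := by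
    rw [Matrix.mul_assoc, hBB, Matrix.mul_sub, Matrix.mul_one, nonsing_inv_mul_cancel_left _ _ hA]
  have hABBA : A⁻¹ * B * (Bᴴ * A) = Aᴴ * A - 1 := by
    rw [← Matrix.mul_assoc, hABB, Matrix.sub_mul, nonsing_inv_mul _ hA]
  have hABBB : A⁻¹ * B * (Bᴴ * B) = Aᴴ * B - A⁻¹ * B := by
    rw [← Matrix.mul_assoc, hABB, Matrix.sub_mul]
  have hBAA (k : ℕ) (X : Matrix (Fin p) (Fin k) ℂ) :
      Bᴴ * (Aᴴ)⁻¹ * (Aᴴ * X) = Bᴴ * X := by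
    rw [Matrix.mul_assoc, nonsing_inv_mul_cancel_left _ _ hAH]
  rw [sub_eq_iff_eq_add]
  simp only [toBlocks_fromBlocks₁₁, toBlocks_fromBlocks₁₂, fromBlocks_conjTranspose,
    ← fromBlocks_one, fromBlocks_multiply, fromBlocks_add, hC, hCD, hDC, hD,
    fromBlocks_inj, Matrix.mul_add, Matrix.mul_sub, Matrix.mul_one, Matrix.mul_zero, Matrix.zero_mul,
    hABBA, hABBB, hBAA]
  refine ⟨?_, ?_, ?_, ?_⟩ <;> abel
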